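/- arXiv:2302.09338 — 4 statements merged into one kernel-verified Lean document; each statement's English description precedes it below -/
import Mathlib

section
/- The function g defined on (0, ∞) by g(x) = (1 + x)·ln(1 + 1/x)/√(2x + 1) is strictly decreasing on (0, ∞); moreover g(x) → ∞ as x → 0⁺ and g(x) → 0 as x → ∞, so g is a strictly decreasing bijection from (0, ∞) onto (0, ∞). -/
open Real Filter Set

/-- The threshold function `g(x) = (1 + x) · ln(1 + 1/x) / √(2x + 1)` for `x > 0`. -/
noncomputable def g (x : ℝ) : ℝ := (1 + x) * Real.log (1 + 1 / x) / Real.sqrt (2 * x + 1)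

open scoped Topology

/-!
The numerator `f(x) = (1 + x) · ln(1 + 1/x)` is positive and strictly decreasing, because
`f'(x) = ln(1 + 1/x) - 1/x < 0`; dividing by the positive increasing function `√(2x + 1)` preserves
this. Both limits come from the behaviour of `f`: it blows up at `0⁺`, where the denominator
tends to `1`, and it tends to `1` at `∞`, where the denominator blows up. The intermediate value
theorem then gives surjectivity.
-/

lemma log_one_add_lt_self {y : ℝ} (hy : -1 < y) (hy' : y ≠ 0) : log (1 + y) < y := by
  simpa using log_lt_sub_one_of_pos (neg_lt_iff_pos_add'.1 hy) (add_ne_left.2 hy')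

lemma one_add_mul_log_one_add_one_div_pos {x : ℝ} (hx : 0 < x) :
    0 < (1 + x) * log (1 + 1 / x) :=
  mul_pos (by positivity) (log_pos (lt_add_of_pos_right 1 (one_div_pos.2 hx)))

lemma hasDerivAt_one_add_mul_log_one_add_one_div {x : ℝ} (hx : x ≠ 0) (hx' : 1 + x ≠ 0) :
    HasDerivAt (fun x ↦ (1 + x) * log (1 + 1 / x)) (log (1 + 1 / x) - 1 / x) x := by
  have hquot : 1 + 1 / x = (1 + x) / x := by field_simp; ring
  have hinv : HasDerivAt (fun x : ℝ ↦ 1 + 1 / x) (-(x ^ 2)⁻¹) x := by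
    simpa using (hasDerivAt_inv hx).const_add 1
  have hlog := hinv.log (hquot ▸ div_ne_zero hx' hx)
  refine (((hasDerivAt_id' x).const_add 1).mul hlog).congr_deriv ?_
  rw [hquot]
  field_simp
  ring

lemma strictAntiOn_one_add_mul_log_one_add_one_div :
    StrictAntiOn (fun x : ℝ ↦ (1 + x) * log (1 + 1 / x)) (Ioi 0) := by
  have hderiv (x : ℝ) (hx : 0 < x) :
      HasDerivAt (fun x ↦ (1 + x) * log (1 + 1 / x)) (log (1 + 1 / x) - 1 / x) x :=
    hasDerivAt_one_add_mul_log_one_add_one_div hx.ne' (by positivity)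
  refine strictAntiOn_of_deriv_neg (convex_Ioi 0)
    (fun x hx ↦ (hderiv x hx).continuousAt.continuousWithinAt) fun x hx ↦ ?_
  rw [interior_Ioi, mem_Ioi] at hx
  rw [(hderiv x hx).deriv]
  have hdiv : 0 < 1 / x := one_div_pos.2 hx
  exact sub_neg_of_lt (log_one_add_lt_self (by linarith) hdiv.ne')

lemma tendsto_one_add_mul_log_one_add_one_div_nhdsGT_zero :
    Tendsto (fun x : ℝ ↦ (1 + x) * log (1 + 1 / x)) (𝓝[>] 0) atTop := by
  have hfactor : Tendsto (fun x : ℝ ↦ 1 + x) (𝓝[>] 0) (𝓝 1) :=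
    ((continuous_const.add continuous_id).tendsto' 0 1 (add_zero 1)).mono_left nhdsWithin_le_nhds
  have hdiv : Tendsto (fun x : ℝ ↦ 1 + 1 / x) (𝓝[>] 0) atTop := by
    simpa only [one_div] using tendsto_atTop_add_const_left _ 1 tendsto_inv_nhdsGT_zero
  exact hfactor.pos_mul_atTop one_pos (tendsto_log_atTop.comp hdiv)

lemma tendsto_one_add_mul_log_one_add_one_div_atTop :
    Tendsto (fun x : ℝ ↦ (1 + x) * log (1 + 1 / x)) atTop (𝓝 1) := by
  have hmul : Tendsto (fun x : ℝ ↦ x * log (1 + 1 / x)) atTop (𝓝 1) :=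
    tendsto_mul_log_one_add_div_atTop 1
  have hlog : Tendsto (fun x : ℝ ↦ log (1 + 1 / x)) atTop (𝓝 0) := by
    have hdiv : Tendsto (fun x : ℝ ↦ 1 + 1 / x) atTop (𝓝 1) := by
      simpa using (tendsto_const_nhds (x := (1 : ℝ))).add (tendsto_id.const_div_atTop 1)
    simpa only [log_one] using hdiv.log one_ne_zero
  simpa only [add_mul, one_mul, zero_add] using hlog.add hmul

lemma g_pos {x : ℝ} (hx : 0 < x) : 0 < g x :=
  div_pos (one_add_mul_log_one_add_one_div_pos hx) (sqrt_pos.2 (by positivity))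

lemma continuousOn_g : ContinuousOn g (Ioi 0) := by
  intro x (hx : 0 < x)
  have hnum := hasDerivAt_one_add_mul_log_one_add_one_div hx.ne' (by positivity)
  exact (hnum.continuousAt.div (by fun_prop) (by positivity)).continuousWithinAt

lemma strictAntiOn_g : StrictAntiOn g (Ioi 0) := by
  intro x (hx : 0 < x) y hy hxy
  have hnum := strictAntiOn_one_add_mul_log_one_add_one_div hx hy hxy
  have hden : √(2 * x + 1) ≤ √(2 * y + 1) := by gcongr
  exact div_lt_div₀ hnum hden (one_add_mul_log_one_add_one_div_pos hx).le (by positivity)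

lemma tendsto_g_nhdsGT_zero : Tendsto g (𝓝[>] 0) atTop := by
  have hden : Tendsto (fun x : ℝ ↦ (√(2 * x + 1))⁻¹) (𝓝[>] 0) (𝓝 1) := by
    have hcont : ContinuousAt (fun x : ℝ ↦ (√(2 * x + 1))⁻¹) 0 :=
      ContinuousAt.inv₀ (by fun_prop) (by norm_num)
    simpa using hcont.tendsto.mono_left nhdsWithin_le_nhds
  exact tendsto_one_add_mul_log_one_add_one_div_nhdsGT_zero.atTop_mul_pos one_pos hden

lemma tendsto_g_atTop : Tendsto g atTop (𝓝 0) := by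
  have hden : Tendsto (fun x : ℝ ↦ √(2 * x + 1)) atTop atTop :=
    tendsto_sqrt_atTop.comp
      (tendsto_atTop_add_const_right _ 1 (tendsto_id.const_mul_atTop two_pos))
  exact tendsto_one_add_mul_log_one_add_one_div_atTop.div_atTop hden

/-- `g` is strictly decreasing on `(0, ∞)`, tends to `∞` as `x → 0⁺`, tends to `0`
as `x → ∞`, and is a strictly decreasing bijection from `(0, ∞)` onto `(0, ∞)`. -/
theorem g_strictAnti_tendsto_bijOn :
    StrictAntiOn g (Set.Ioi (0 : ℝ)) ∧
    Filter.Tendsto g (nhdsWithin 0 (Set.Ioi 0)) Filter.atTop ∧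
    Filter.Tendsto g Filter.atTop (nhds 0) ∧
    Set.BijOn g (Set.Ioi 0) (Set.Ioi 0) := by
  have hsurj : SurjOn g (Ioi 0) (Ioi 0) :=
    isPreconnected_Ioi.intermediate_value_Ioi (le_principal_iff.2 (Ioi_mem_atTop 0))
      (le_principal_iff.2 self_mem_nhdsWithin) continuousOn_g tendsto_g_atTop tendsto_g_nhdsGT_zero
  exact ⟨strictAntiOn_g, tendsto_g_nhdsGT_zero, tendsto_g_atTop,
    fun _ hx ↦ g_pos hx, strictAntiOn_g.injOn, hsurj⟩
end

section
/- Let α ≥ 0 and let x₀ > 0 satisfy α ≤ g(x₀), where g(x) = (1 + x)·ln(1 + 1/x)/√(2x + 1). Then the function f_α(x) = ln(1 + 1/x) − α·√(2x + 1)/(1 + x) is strictly decreasing on the interval (0, x₀]. -/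
/-- The finite-blocklength rate as a function of the inverse SINR:
`f_α(x) = ln(1 + 1/x) − α·√(2x + 1)/(1 + x)`. -/
noncomputable def fα (α x : ℝ) : ℝ :=
  Real.log (1 + 1 / x) - α * Real.sqrt (2 * x + 1) / (1 + x)

/-!
For `x > 0`, the sign of `f_α'(x)` is that of `α - c(x)`, where
`c(x) = (1 + x) √(2x + 1) / x²` is the value of `α` making `x` a stationary point. In terms of the
SINR `γ = 1/x` one has `c = (1 + γ) √(γ² + 2γ)`, so `c` is strictly decreasing in `x`, and
`α ≤ c(x₀)` already makes `f_α'` negative on `(0, x₀)`. Finally `g ≤ c` because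
`ln(1 + 1/x) ≤ 1/x` and `x ≤ 2x + 1`.
-/

open Set

/-- The critical coefficient at `x`: the value of `α` for which `x > 0` is a stationary point of
`fα α`. It is the threshold separating the signs of the derivative of `fα α` at `x`. -/
noncomputable def criticalCoeff (x : ℝ) : ℝ := (1 + x) * √(2 * x + 1) / x ^ 2

lemma hasDerivAt_log_one_add_one_div {x : ℝ} (hx : x ≠ 0) (hx' : 1 + x ≠ 0) :
    HasDerivAt (fun y ↦ Real.log (1 + 1 / y)) (-(1 / (x * (1 + x)))) x := by
  have h_arg : 1 + 1 / x = (1 + x) / x := by field_simp; ring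
  have h_inner : HasDerivAt (fun y : ℝ ↦ 1 + 1 / y) (-(x ^ 2)⁻¹) x := by
    simpa only [one_div] using (hasDerivAt_inv hx).const_add 1
  refine (h_inner.log (h_arg ▸ div_ne_zero hx' hx)).congr_deriv ?_
  rw [h_arg]
  field_simp

lemma hasDerivAt_sqrt_two_mul_add_one_div {x : ℝ} (hx : 0 < 2 * x + 1) :
    HasDerivAt (fun y ↦ √(2 * y + 1) / (1 + y)) (-(x / (√(2 * x + 1) * (1 + x) ^ 2))) x := by
  have hx' : 1 + x ≠ 0 := by linarith
  have h_sqrt : HasDerivAt (fun y ↦ √(2 * y + 1)) (2 / (2 * √(2 * x + 1))) x :=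
    (((hasDerivAt_id' x).const_mul 2).add_const 1).sqrt hx.ne' |>.congr_deriv (by rw [mul_one])
  refine (h_sqrt.div ((hasDerivAt_id' x).const_add 1) hx').congr_deriv ?_
  have hs : √(2 * x + 1) ≠ 0 := (Real.sqrt_pos.2 hx).ne'
  have hsq : √(2 * x + 1) ^ 2 = 2 * x + 1 := Real.sq_sqrt hx.le
  field_simp
  rw [hsq]
  ring

lemma hasDerivAt_fα (α : ℝ) {x : ℝ} (hx : 0 < x) :
    HasDerivAt (fα α) ((α - criticalCoeff x) * (x / (√(2 * x + 1) * (1 + x) ^ 2))) x := by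
  have h_log := hasDerivAt_log_one_add_one_div hx.ne' (by positivity)
  have h_sqrt := hasDerivAt_sqrt_two_mul_add_one_div (x := x) (by positivity)
  have h_eq : fα α = fun y ↦ Real.log (1 + 1 / y) - α * (√(2 * y + 1) / (1 + y)) := by
    funext y
    rw [fα, mul_div_assoc]
  rw [h_eq]
  refine (h_log.sub (h_sqrt.const_mul α)).congr_deriv ?_
  rw [criticalCoeff]
  field_simp
  ring

lemma criticalCoeff_eq_inv {x : ℝ} (hx : 0 < x) :
    criticalCoeff x = (1 + x⁻¹) * √(x⁻¹ ^ 2 + 2 * x⁻¹) := by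
  have h_arg : x⁻¹ ^ 2 + 2 * x⁻¹ = (2 * x + 1) / x ^ 2 := by field_simp; ring
  rw [criticalCoeff, h_arg, Real.sqrt_div' _ (sq_nonneg x), Real.sqrt_sq hx.le]
  field_simp
  ring

lemma criticalCoeff_strictAntiOn : StrictAntiOn criticalCoeff (Ioi 0) := by
  intro x (hx : 0 < x) y (hy : 0 < y) hxy
  rw [criticalCoeff_eq_inv hx, criticalCoeff_eq_inv hy]
  gcongr

lemma g_le_criticalCoeff {x : ℝ} (hx : 0 < x) : g x ≤ criticalCoeff x := by
  have h_log : Real.log (1 + 1 / x) ≤ 1 / x := by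
    linarith [Real.log_le_sub_one_of_pos (x := 1 + 1 / x) (by positivity)]
  have hsq : √(2 * x + 1) ^ 2 = 2 * x + 1 := Real.sq_sqrt (by positivity)
  calc g x ≤ (1 + x) * (1 / x) / √(2 * x + 1) := by rw [g]; gcongr
    _ = (1 + x) * x / (x ^ 2 * √(2 * x + 1)) := by field_simp
    _ ≤ (1 + x) * √(2 * x + 1) ^ 2 / (x ^ 2 * √(2 * x + 1)) := by
      rw [hsq]
      gcongr
      linarith
    _ = criticalCoeff x := by rw [criticalCoeff]; field_simp

theorem fα_strictAntiOn_general {α x₀ : ℝ} (hα : α ≤ criticalCoeff x₀) :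
    StrictAntiOn (fα α) (Ioc 0 x₀) := by
  refine strictAntiOn_of_deriv_neg (convex_Ioc 0 x₀)
    (fun x hx ↦ (hasDerivAt_fα α hx.1).continuousAt.continuousWithinAt) fun x hx ↦ ?_
  obtain ⟨hx, hxx₀⟩ : 0 < x ∧ x < x₀ := by rwa [interior_Ioc] at hx
  have hα_lt : α < criticalCoeff x :=
    hα.trans_lt (criticalCoeff_strictAntiOn hx (hx.trans hxx₀) hxx₀)
  rw [(hasDerivAt_fα α hx).deriv]
  exact mul_neg_of_neg_of_pos (sub_neg.2 hα_lt) (by positivity)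

/-- If `α ≥ 0` and `x₀ > 0` satisfy `α ≤ g(x₀)`, then `f_α` is strictly decreasing
on `(0, x₀]`. -/
theorem fα_strictAntiOn (α x₀ : ℝ) (hα : 0 ≤ α) (hx₀ : 0 < x₀) (hg : α ≤ g x₀) :
    StrictAntiOn (fα α) (Set.Ioc 0 x₀) :=
  fα_strictAntiOn_general (hg.trans (g_le_criticalCoeff hx₀))
end

section
/- Let S be a nonempty finite index set, and let (b_m)_{m∈S}, (p_m)_{m∈S}, and (p̂_m)_{m∈S} be families of strictly positive reals. Set θ̂ = ∑_{m∈S} √(b_m · p̂_m), a_m = √(b_m · p̂_m)/(2·θ̂) for each m, and c = θ̂ / ∏_{m∈S} (b_m · p̂_m)^{a_m}. Then ∑_{m∈S} √(b_m · p_m) ≥ c · ∏_{m∈S} (b_m · p_m)^{a_m}, and equality holds when p_m = p̂_m for all m ∈ S. -/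
/-!
The supporting tangent of the log-sum-exp function at `y` is the weighted AM-GM inequality with
weights `y i / ∑ j, y j`, applied to the ratios `x i / y i`; this is the condensation of a
posynomial into a monomial in geometric programming. Substituting `x i ^ r` and `y i ^ r` multiplies
the exponents by `r`, and the square roots are the case `r = 1 / 2`.
-/

section Condensation

variable {ι : Type*} {S : Finset ι} {x y : ι → ℝ}

theorem sum_mul_prod_div_rpow_le_sum (hx : ∀ i ∈ S, 0 ≤ x i) (hy : ∀ i ∈ S, 0 ≤ y i) :
    (∑ j ∈ S, y j) * ∏ i ∈ S, (x i / y i) ^ (y i / ∑ j ∈ S, y j) ≤ ∑ i ∈ S, x i := by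
  set θ := ∑ j ∈ S, y j with hθ_def
  obtain hθ | hθ : 0 = θ ∨ 0 < θ := (Finset.sum_nonneg hy).eq_or_lt
  · rw [← hθ, zero_mul]
    exact Finset.sum_nonneg hx
  have amgm : ∏ i ∈ S, (x i / y i) ^ (y i / θ) ≤ ∑ i ∈ S, y i / θ * (x i / y i) :=
    Real.geom_mean_le_arith_mean_weighted S _ _ (fun i hi ↦ div_nonneg (hy i hi) hθ.le)
      (by rw [← Finset.sum_div, ← hθ_def, div_self hθ.ne'])
      (fun i hi ↦ div_nonneg (hx i hi) (hy i hi))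
  calc θ * ∏ i ∈ S, (x i / y i) ^ (y i / θ)
      ≤ θ * ∑ i ∈ S, y i / θ * (x i / y i) := by gcongr
    _ = ∑ i ∈ S, y i * (x i / y i) := by
      rw [Finset.mul_sum]
      exact Finset.sum_congr rfl fun i _ ↦ by field_simp
    _ ≤ ∑ i ∈ S, x i := by
      -- Only an inequality: a term with `y i = 0` vanishes on the left.
      refine Finset.sum_le_sum fun i hi ↦ ?_
      rw [mul_div_left_comm]
      exact mul_le_of_le_one_right (hx i hi) (div_self_le_one _)

theorem sum_rpow_mul_prod_div_rpow_le_sum_rpow (hx : ∀ i ∈ S, 0 ≤ x i) (hy : ∀ i ∈ S, 0 ≤ y i)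
    (r : ℝ) :
    (∑ j ∈ S, y j ^ r) * ∏ i ∈ S, (x i / y i) ^ (r * (y i ^ r / ∑ j ∈ S, y j ^ r)) ≤
      ∑ i ∈ S, x i ^ r := by
  have ratio_rpow : ∀ i ∈ S, (x i / y i) ^ (r * (y i ^ r / ∑ j ∈ S, y j ^ r)) =
      (x i ^ r / y i ^ r) ^ (y i ^ r / ∑ j ∈ S, y j ^ r) := fun i hi ↦ by
    rw [Real.rpow_mul (div_nonneg (hx i hi) (hy i hi)), Real.div_rpow (hx i hi) (hy i hi)]
  rw [Finset.prod_congr rfl ratio_rpow]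
  exact sum_mul_prod_div_rpow_le_sum (fun i hi ↦ Real.rpow_nonneg (hx i hi) r)
    (fun i hi ↦ Real.rpow_nonneg (hy i hi) r)

theorem prod_div_rpow_eq_div (hx : ∀ i ∈ S, 0 ≤ x i) (hy : ∀ i ∈ S, 0 ≤ y i) (a : ι → ℝ) :
    ∏ i ∈ S, (x i / y i) ^ a i = (∏ i ∈ S, x i ^ a i) / ∏ i ∈ S, y i ^ a i := by
  rw [← Finset.prod_div_distrib]
  exact Finset.prod_congr rfl fun i hi ↦ Real.div_rpow (hx i hi) (hy i hi) (a i)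

end Condensation

/-- Theorem 4 of the paper: with `θ̂ = ∑_{m∈S} √(b_m p̂_m)`,
`a_m = √(b_m p̂_m)/(2θ̂)` and `c = θ̂ / ∏_{m∈S} (b_m p̂_m)^{a_m}`, the sum of square
roots `∑_{m∈S} √(b_m p_m)` is lower bounded by the monomial
`c · ∏_{m∈S} (b_m p_m)^{a_m}`, with equality when `p = p̂` on `S`. -/
theorem sum_sqrt_ge_monomial {ι : Type*} (S : Finset ι) (hS : S.Nonempty)
    (b p ph : ι → ℝ)
    (hb : ∀ m ∈ S, 0 < b m) (hp : ∀ m ∈ S, 0 < p m) (hph : ∀ m ∈ S, 0 < ph m)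
    (θh : ℝ) (hθh : θh = ∑ m ∈ S, Real.sqrt (b m * ph m))
    (a : ι → ℝ) (ha : ∀ m ∈ S, a m = Real.sqrt (b m * ph m) / (2 * θh))
    (c : ℝ) (hc : c = θh / ∏ m ∈ S, (b m * ph m) ^ (a m)) :
    c * ∏ m ∈ S, (b m * p m) ^ (a m) ≤ ∑ m ∈ S, Real.sqrt (b m * p m) ∧
    ((∀ m ∈ S, p m = ph m) →
      c * ∏ m ∈ S, (b m * p m) ^ (a m) = ∑ m ∈ S, Real.sqrt (b m * p m)) := by
  have hx : ∀ m ∈ S, 0 < b m * p m := fun m hm ↦ mul_pos (hb m hm) (hp m hm)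
  have hy : ∀ m ∈ S, 0 < b m * ph m := fun m hm ↦ mul_pos (hb m hm) (hph m hm)
  have monomial_eq : c * ∏ m ∈ S, (b m * p m) ^ a m =
      θh * ∏ m ∈ S, (b m * p m / (b m * ph m)) ^ a m := by
    rw [prod_div_rpow_eq_div (fun m hm ↦ (hx m hm).le) (fun m hm ↦ (hy m hm).le), hc,
      div_mul_eq_mul_div, mul_div_assoc]
  rw [monomial_eq]
  constructor
  · have exponent_eq : ∀ m ∈ S, a m = 1 / 2 * (√(b m * ph m) / θh) := fun m hm ↦ by
      rw [ha m hm, div_mul_div_comm, one_mul]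
    rw [Finset.prod_congr rfl fun m hm ↦ congrArg _ (exponent_eq m hm), hθh]
    simp only [Real.sqrt_eq_rpow]
    exact sum_rpow_mul_prod_div_rpow_le_sum_rpow (fun m hm ↦ (hx m hm).le)
      (fun m hm ↦ (hy m hm).le) (1 / 2)
  · intro hpph
    have prod_eq_one : ∏ m ∈ S, (b m * p m / (b m * ph m)) ^ a m = 1 :=
      Finset.prod_eq_one fun m hm ↦ by rw [hpph m hm, div_self (hy m hm).ne', Real.one_rpow]
    rw [prod_eq_one, mul_one, hθh]
    exact Finset.sum_congr rfl fun m hm ↦ by rw [hpph m hm]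
end

section
/- Let S be a nonempty finite index set, let K > 0, and for each m ∈ S let c_m > 0, d_m ≥ 0, β_m > 0 be constants, and let e > 0. Define λ_m(p) = K·p·β_m²/(K·p·β_m + 1) and γ̂(p) = ( ∑_{m∈S} √(c_m · λ_m(p)) )² / ( ∑_{m∈S} d_m·(β_m − λ_m(p)) + e ). Then γ̂ is strictly increasing on (0, ∞). -/
/-!
A larger pilot power improves every channel estimate: since `β - λ(p) = β / (K p β + 1)`, the
estimate variance `λ(p)` increases strictly in `p` while never exceeding `β`. Better estimates
raise the coherent gain in the numerator of the SINR and lower the estimation-error interference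
in its denominator, and the noise term `e > 0` keeps the denominator positive.
-/

section MMSEVariance

open Set

/-- The variance of the MMSE estimate of a channel with large-scale gain `β` from a pilot of
energy `K * p`, where `p` is the pilot power and the noise variance is normalised to `1`. -/
noncomputable def mmseVariance (K β p : ℝ) : ℝ :=
  K * p * β ^ 2 / (K * p * β + 1)

variable {K β p : ℝ}

theorem mmseVariance_eq_sub_div (h : K * p * β + 1 ≠ 0) :
    mmseVariance K β p = β - β / (K * p * β + 1) := by
  unfold mmseVariance
  field_simp
  ring

theorem mapsTo_mmseVariance (hK : 0 ≤ K) (hβ : 0 ≤ β) :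
    MapsTo (mmseVariance K β) (Ici 0) (Icc 0 β) := by
  intro p (hp : 0 ≤ p)
  have nonneg : 0 ≤ mmseVariance K β p := by
    unfold mmseVariance
    positivity
  have le_gain : mmseVariance K β p ≤ β := by
    rw [mmseVariance_eq_sub_div (by positivity)]
    exact sub_le_self β (by positivity)
  exact ⟨nonneg, le_gain⟩

theorem strictMonoOn_mmseVariance (hK : 0 < K) (hβ : 0 < β) :
    StrictMonoOn (mmseVariance K β) (Ici 0) := by
  intro p (hp : 0 ≤ p) q (hq : 0 ≤ q) hpq
  rw [mmseVariance_eq_sub_div (by positivity), mmseVariance_eq_sub_div (by positivity)]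
  gcongr

end MMSEVariance

section SINR

open Finset

variable {ι : Type*} {S : Finset ι} {c d β : ι → ℝ}

theorem sum_sqrt_mul_lt_sum_sqrt_mul {v w : ι → ℝ} (hc : ∀ m ∈ S, 0 ≤ c m)
    (hc_pos : ∃ m ∈ S, 0 < c m) (hv : ∀ m ∈ S, 0 ≤ v m) (hvw : ∀ m ∈ S, v m < w m) :
    ∑ m ∈ S, √(c m * v m) < ∑ m ∈ S, √(c m * w m) := by
  obtain ⟨m₀, hm₀, hc₀⟩ := hc_pos
  refine sum_lt_sum (fun m hm => ?_) ⟨m₀, hm₀, ?_⟩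
  · exact Real.sqrt_le_sqrt (mul_le_mul_of_nonneg_left (hvw m hm).le (hc m hm))
  · exact Real.sqrt_lt_sqrt (mul_nonneg hc₀.le (hv m₀ hm₀))
      (mul_lt_mul_of_pos_left (hvw m₀ hm₀) hc₀)

theorem sum_mul_sub_le_sum_mul_sub {R : Type*} [Ring R] [PartialOrder R] [IsOrderedRing R]
    {d β v w : ι → R} (hd : ∀ m ∈ S, 0 ≤ d m) (hvw : ∀ m ∈ S, v m ≤ w m) :
    ∑ m ∈ S, d m * (β m - w m) ≤ ∑ m ∈ S, d m * (β m - v m) :=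
  sum_le_sum fun m hm => mul_le_mul_of_nonneg_left (sub_le_sub_left (hvw m hm) (β m)) (hd m hm)

theorem sinr_strictMono_in_pilot_power_general {α : Type*} [Preorder α] {s : Set α}
    {v : ι → α → ℝ} {e : ℝ}
    (hc : ∀ m ∈ S, 0 ≤ c m) (hc_pos : ∃ m ∈ S, 0 < c m) (hd : ∀ m ∈ S, 0 ≤ d m) (he : 0 < e)
    (hvβ : ∀ m ∈ S, Set.MapsTo (v m) s (Set.Icc 0 (β m))) (hv : ∀ m ∈ S, StrictMonoOn (v m) s) :
    StrictMonoOn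
      (fun p => (∑ m ∈ S, √(c m * v m p)) ^ 2 / (∑ m ∈ S, d m * (β m - v m p) + e)) s := by
  intro p hp q hq hpq
  have variance_lt : ∀ m ∈ S, v m p < v m q := fun m hm => hv m hm hp hq hpq
  have gain_lt : ∑ m ∈ S, √(c m * v m p) < ∑ m ∈ S, √(c m * v m q) :=
    sum_sqrt_mul_lt_sum_sqrt_mul hc hc_pos (fun m hm => (hvβ m hm hp).1) variance_lt
  have interference_le : ∑ m ∈ S, d m * (β m - v m q) ≤ ∑ m ∈ S, d m * (β m - v m p) :=
    sum_mul_sub_le_sum_mul_sub hd fun m hm => (variance_lt m hm).le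
  have interference_nonneg : 0 ≤ ∑ m ∈ S, d m * (β m - v m q) :=
    sum_nonneg fun m hm => mul_nonneg (hd m hm) (sub_nonneg.2 (hvβ m hm hq).2)
  exact div_lt_div₀
    (pow_lt_pow_left₀ gain_lt (sum_nonneg fun _ _ => Real.sqrt_nonneg _) two_ne_zero)
    (add_le_add_left interference_le e) (sq_nonneg _)
    (add_pos_of_nonneg_of_pos interference_nonneg he)

end SINR

/-- The lower-bound SINR `γ̂(p)`, common to the MRT, FZF and LZF precoding schemes,
is strictly increasing in the device's own pilot power `p` on `(0, ∞)`.  Here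
`λ_m(p) = K·p·β_m²/(K·p·β_m + 1)` is the MMSE channel-estimate variance, and
`γ̂(p) = (∑_{m∈S} √(c_m λ_m(p)))² / (∑_{m∈S} d_m (β_m − λ_m(p)) + e)`. -/
theorem sinr_strictMono_in_pilot_power {ι : Type*} (S : Finset ι) (hS : S.Nonempty)
    (K : ℝ) (hK : 0 < K)
    (c d β : ι → ℝ)
    (hc : ∀ m ∈ S, 0 < c m) (hd : ∀ m ∈ S, 0 ≤ d m) (hβ : ∀ m ∈ S, 0 < β m)
    (e : ℝ) (he : 0 < e)
    (lam : ι → ℝ → ℝ) (hlam : ∀ m p, lam m p = K * p * (β m) ^ 2 / (K * p * β m + 1))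
    (γhat : ℝ → ℝ)
    (hγhat : ∀ p, γhat p =
      (∑ m ∈ S, Real.sqrt (c m * lam m p)) ^ 2 /
        (∑ m ∈ S, d m * (β m - lam m p) + e)) :
    StrictMonoOn γhat (Set.Ioi 0) := by
  obtain rfl : lam = fun m => mmseVariance K (β m) := funext₂ hlam
  rw [funext hγhat]
  exact (sinr_strictMono_in_pilot_power_general (fun m hm => (hc m hm).le)
    (hS.imp fun m hm => ⟨hm, hc m hm⟩) hd he
    (fun m hm => mapsTo_mmseVariance hK.le (hβ m hm).le)
    (fun m hm => strictMonoOn_mmseVariance hK (hβ m hm))).mono Set.Ioi_subset_Ici_self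
end
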